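/- arXiv:2402.18290 — 2 statements merged into one kernel-verified Lean document; each statement's English description precedes it below -/
import Mathlib

section
/- For h = 3 there exists a group isomorphism u : ℤ/8 ⊕ ℤ/2 ⊕ ℤ/2 → ℤ³/A₃ℤ³ such that for all a, b with integer lifts x = (x₁,x₂,x₃) and y = (y₁,y₂,y₃): ∂λ(u(a),u(b)) = 3x₁y₁/8 + (x₁y₂ + x₂y₁ + x₁y₃ + x₃y₁ + x₂y₃ + x₃y₂)/2 mod ℤ and ∂θ(u(a)) = 3x₁²/16 + (x₂² + x₃² + x₁x₂ + x₁x₃ + x₂x₃)/2 mod ℤ. -/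
open Matrix

noncomputable section

/-- The matrix `Q_h`: first row all `4`; in rows `2,…,h` diagonal and
above-diagonal entries are `2`, below-diagonal entries are `0`. -/
def Qmat (h : ℕ) : Matrix (Fin h) (Fin h) ℤ :=
  Matrix.of fun i j => if (i : ℕ) = 0 then 4 else if i ≤ j then 2 else 0

/-- `A_h = Q_h + Q_hᵀ`. -/
def Amat (h : ℕ) : Matrix (Fin h) (Fin h) ℤ := Qmat h + (Qmat h)ᵀ

/-- `A_h` viewed as a rational matrix. -/
def AmatQ (h : ℕ) : Matrix (Fin h) (Fin h) ℚ := (Amat h).map (Int.cast)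

/-- `Q_h` viewed as a rational matrix. -/
def QmatQ (h : ℕ) : Matrix (Fin h) (Fin h) ℚ := (Qmat h).map (Int.cast)

/-- The cokernel `ℤ^h / A_h ℤ^h`. -/
abbrev Coker (h : ℕ) := (Fin h → ℤ) ⧸ LinearMap.range ((Amat h).mulVecLin)

/-- The quotient map `ℤ^h → ℤ^h / A_h ℤ^h`. -/
def ckMk {h : ℕ} (x : Fin h → ℤ) : Coker h := Submodule.Quotient.mk x

def ratVec {h : ℕ} (x : Fin h → ℤ) : Fin h → ℚ := fun i => (x i : ℚ)

/-- The boundary linking form `∂λ` computed on representatives: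
`x ᵀ A_h⁻¹ y mod ℤ`, valued in `ℚ/ℤ`. -/
def linkR (h : ℕ) (x y : Fin h → ℤ) : AddCircle (1 : ℚ) :=
  ((ratVec x ⬝ᵥ ((AmatQ h)⁻¹ *ᵥ ratVec y) : ℚ) : AddCircle (1 : ℚ))

/-- The boundary quadratic form `∂θ` computed on representatives:
`xᵀ A_h⁻¹ Q_h A_h⁻¹ x mod ℤ`, valued in `ℚ/ℤ`. -/
def quadR (h : ℕ) (x : Fin h → ℤ) : AddCircle (1 : ℚ) :=
  ((ratVec x ⬝ᵥ (((AmatQ h)⁻¹ * QmatQ h * (AmatQ h)⁻¹) *ᵥ ratVec x) : ℚ) : AddCircle (1 : ℚ))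
/-!
Since `xᵀ Q x = xᵀ A x / 2`, the form `∂θ` is represented by `xᵀ A⁻¹ x / 2`, so both forms are read
off from the rational bilinear form `xᵀ A⁻¹ y`. For `h = 3`, the columns of a unimodular `P` with
`A V = P diag(8, 2, 2)`, `V` unimodular, are generators of orders `8, 2, 2` of the cokernel, and
`Pᵀ A⁻¹ P` has diagonal `3/8, 1, 1` and all other entries `1/2`. The two entries `1` vanish mod `ℤ`
in `∂λ`, but their halves give the terms `x₂² / 2` and `x₃² / 2` of `∂θ`.
-/

section SymmetricMatrix

variable {n R : Type*} [Fintype n]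

theorem dotProduct_add_transpose_mulVec_self [CommSemiring R] (Q : Matrix n n R) (x : n → R) :
    x ⬝ᵥ (Q + Qᵀ) *ᵥ x = 2 * (x ⬝ᵥ Q *ᵥ x) := by
  rw [add_mulVec, dotProduct_add, dotProduct_transpose_mulVec, two_mul]

variable [CommRing R] [DecidableEq n] {A : Matrix n n R}

theorem dotProduct_inv_mulVec_comm (hA : A.IsSymm) (x y : n → R) :
    x ⬝ᵥ A⁻¹ *ᵥ y = y ⬝ᵥ A⁻¹ *ᵥ x := by
  rw [← dotProduct_transpose_mulVec, transpose_nonsing_inv, hA.eq]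

theorem add_mulVec_dotProduct_inv_mulVec (hA : A.IsSymm) (hdet : IsUnit A.det) (x w y : n → R) :
    (x + A *ᵥ w) ⬝ᵥ A⁻¹ *ᵥ y = x ⬝ᵥ A⁻¹ *ᵥ y + w ⬝ᵥ y := by
  rw [dotProduct_inv_mulVec_comm hA, mulVec_add, mulVec_mulVec, nonsing_inv_mul A hdet,
    one_mulVec, dotProduct_add, dotProduct_inv_mulVec_comm hA, dotProduct_comm y w]

theorem two_mul_dotProduct_inv_mul_mul_inv_mulVec_self {Q : Matrix n n R}
    (hdet : IsUnit (Q + Qᵀ).det) (x : n → R) :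
    2 * (x ⬝ᵥ ((Q + Qᵀ)⁻¹ * Q * (Q + Qᵀ)⁻¹) *ᵥ x) = x ⬝ᵥ (Q + Qᵀ)⁻¹ *ᵥ x := by
  have hA : (Q + Qᵀ).IsSymm := isSymm_add_transpose_self Q
  set A := Q + Qᵀ with hAQ
  calc 2 * (x ⬝ᵥ (A⁻¹ * Q * A⁻¹) *ᵥ x)
      = 2 * ((A⁻¹ *ᵥ x) ⬝ᵥ Q *ᵥ (A⁻¹ *ᵥ x)) := by
        rw [← mulVec_mulVec, ← mulVec_mulVec, dotProduct_inv_mulVec_comm hA, dotProduct_comm]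
    _ = (A⁻¹ *ᵥ x) ⬝ᵥ A *ᵥ (A⁻¹ *ᵥ x) := by
        rw [hAQ, dotProduct_add_transpose_mulVec_self]
    _ = x ⬝ᵥ A⁻¹ *ᵥ x := by
        rw [mulVec_mulVec, mul_nonsing_inv A hdet, one_mulVec, dotProduct_comm]

end SymmetricMatrix

theorem exists_addEquiv_of_ker_eq {G H K : Type*} [AddGroup G] [AddGroup H] [AddGroup K]
    {f : G →+ H} {g : G →+ K} (hf : Function.Surjective f) (hg : Function.Surjective g)
    (hker : f.ker = g.ker) : ∃ e : H ≃+ K, ∀ x, e (f x) = g x := by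
  let ef := QuotientAddGroup.quotientKerEquivOfSurjective f hf
  let eg := QuotientAddGroup.quotientKerEquivOfSurjective g hg
  refine ⟨ef.symm.trans ((QuotientAddGroup.quotientAddEquivOfEq hker).trans eg), fun x => ?_⟩
  have hx : ef.symm (f x) = (x : G ⧸ f.ker) := (AddEquiv.symm_apply_eq ef).2 rfl
  rw [AddEquiv.trans_apply, hx]
  rfl

section Cokernel

variable {n : Type*} [Fintype n] [DecidableEq n]

theorem forall_intCast_zmod_eq_zero_iff (d : n → ℕ) (x : n → ℤ) :
    (∀ i, (x i : ZMod (d i)) = 0) ↔ ∃ w, diagonal (fun i => (d i : ℤ)) *ᵥ w = x := by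
  simp only [ZMod.intCast_zmod_eq_zero_iff_dvd, dvd_def, Classical.skolem, funext_iff,
    mulVec_diagonal, eq_comm]

theorem mulVec_mem_range_iff_of_mul_eq_mul {R : Type*} [CommRing R] {A P V D : Matrix n n R}
    (hP : IsUnit P) (hV : IsUnit V) (h : A * V = P * D) (x : n → R) :
    P *ᵥ x ∈ LinearMap.range A.mulVecLin ↔ ∃ w, D *ᵥ w = x := by
  have hAV (w : n → R) : A *ᵥ (V *ᵥ w) = P *ᵥ (D *ᵥ w) := by simp only [mulVec_mulVec, h]
  simp only [LinearMap.mem_range, mulVecLin_apply]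
  rw [(mulVec_surjective_iff_isUnit.2 hV).exists]
  simp only [hAV, (mulVec_injective_of_isUnit hP).eq_iff]

theorem exists_addEquiv_coker_of_smithNormalForm {A P V : Matrix n n ℤ} {d : n → ℕ}
    (hP : IsUnit P) (hV : IsUnit V) (h : A * V = P * diagonal fun i => (d i : ℤ)) :
    ∃ e : (∀ i, ZMod (d i)) ≃+ (n → ℤ) ⧸ LinearMap.range A.mulVecLin,
      ∀ x : n → ℤ, e (fun i => x i) = Submodule.Quotient.mk (P *ᵥ x) := by
  let f : (n → ℤ) →+ ∀ i, ZMod (d i) := AddMonoidHom.piMap fun i => Int.castAddHom (ZMod (d i))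
  let g : (n → ℤ) →+ (n → ℤ) ⧸ LinearMap.range A.mulVecLin :=
    ((LinearMap.range A.mulVecLin).mkQ ∘ₗ P.mulVecLin).toAddMonoidHom
  have hf : Function.Surjective f :=
    Function.Surjective.piMap fun _ => ZMod.intCast_surjective
  have hg : Function.Surjective g :=
    (Submodule.mkQ_surjective _).comp (mulVec_surjective_iff_isUnit.2 hP)
  have hker : f.ker = g.ker := by
    ext x
    calc f x = 0 ↔ ∀ i, (x i : ZMod (d i)) = 0 := funext_iff
      _ ↔ P *ᵥ x ∈ LinearMap.range A.mulVecLin := by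
        rw [forall_intCast_zmod_eq_zero_iff, mulVec_mem_range_iff_of_mul_eq_mul hP hV h]
      _ ↔ g x = 0 := (Submodule.Quotient.mk_eq_zero _).symm
  exact exists_addEquiv_of_ker_eq hf hg hker

end Cokernel

theorem coe_add_intCast_addCircle_one {K : Type*} [Ring K] (q : K) (m : ℤ) :
    ((q + m : K) : AddCircle (1 : K)) = q :=
  QuotientAddGroup.mk_add_of_mem q ⟨m, by simp⟩

section BoundaryForms

variable {h : ℕ}

theorem ratVec_add (x y : Fin h → ℤ) : ratVec (x + y) = ratVec x + ratVec y := by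
  ext i
  simp [ratVec]

theorem ratVec_mulVec {k : ℕ} (M : Matrix (Fin k) (Fin h) ℤ) (x : Fin h → ℤ) :
    ratVec (M *ᵥ x) = M.map Int.cast *ᵥ ratVec x :=
  funext fun i => RingHom.map_mulVec (Int.castRingHom ℚ) M x i

theorem ratVec_dotProduct_ratVec (x y : Fin h → ℤ) : ratVec x ⬝ᵥ ratVec y = (x ⬝ᵥ y : ℤ) :=
  (RingHom.map_dotProduct (Int.castRingHom ℚ) x y).symm

theorem AmatQ_eq_add_transpose (h : ℕ) : AmatQ h = QmatQ h + (QmatQ h)ᵀ := by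
  ext i j
  simp [AmatQ, Amat, QmatQ]

theorem isSymm_AmatQ (h : ℕ) : (AmatQ h).IsSymm := by
  rw [AmatQ_eq_add_transpose]
  exact isSymm_add_transpose_self _

theorem AmatQ_apply (i j : Fin h) :
    AmatQ h i j = 2 + (if (i : ℕ) = 0 then 2 else 0) + (if (j : ℕ) = 0 then 2 else 0) +
      if i = j then 2 else 0 := by
  simp only [AmatQ, Amat, Qmat, map_apply, Matrix.add_apply, transpose_apply, of_apply]
  push_cast
  grind

/-- The rational inverse of `A_h`, in closed form: it shows that `A_h` is invertible over `ℚ` for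
every `h`, and gives the values of the boundary forms. -/
def AmatQInv (h : ℕ) : Matrix (Fin h) (Fin h) ℚ :=
  Matrix.of fun i j =>
    if (i : ℕ) = 0 ∧ (j : ℕ) = 0 then h / 8
    else if (i : ℕ) = 0 ∨ (j : ℕ) = 0 then -1 / 4
    else if i = j then 1 / 2 else 0

theorem AmatQ_succ_mulVec_apply (x : Fin (h + 1) → ℚ) (i : Fin (h + 1)) :
    (AmatQ (h + 1) *ᵥ x) i = 2 * (x i + x 0 + ∑ k, x k) + if i = 0 then 2 * ∑ k, x k else 0 := by
  simp only [mulVec, dotProduct, AmatQ_apply, Fin.val_eq_zero_iff, add_mul, ite_mul, zero_mul,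
    Finset.sum_add_distrib, ← Finset.mul_sum, Finset.sum_ite_eq, Finset.sum_ite_eq',
    Finset.sum_ite_irrel, Finset.sum_const_zero, Finset.mem_univ, ↓reduceIte]
  ring

theorem sum_AmatQInv_succ_apply (j : Fin (h + 1)) :
    ∑ k, AmatQInv (h + 1) k j = if j = 0 then (1 - h : ℚ) / 8 else 1 / 4 := by
  rw [Fin.sum_univ_succ]
  cases j using Fin.cases with
  | zero =>
    simp only [AmatQInv, of_apply, Fin.val_eq_zero_iff, Fin.succ_ne_zero, and_self, and_true,
      or_true, ↓reduceIte, Nat.cast_succ, Finset.sum_const, Finset.card_univ, Fintype.card_fin,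
      nsmul_eq_mul]
    ring
  | succ j =>
    simp only [AmatQInv, of_apply, Fin.val_eq_zero_iff, Fin.succ_ne_zero, and_false, or_false,
      and_self, or_self, Fin.succ_inj, ↓reduceIte, Finset.sum_ite_eq', Finset.mem_univ]
    norm_num

theorem AmatQ_mul_AmatQInv (h : ℕ) : AmatQ h * AmatQInv h = 1 := by
  cases h with
  | zero => exact Subsingleton.elim _ _
  | succ h =>
    ext i j
    change (AmatQ (h + 1) *ᵥ fun k => AmatQInv (h + 1) k j) i = _
    rw [AmatQ_succ_mulVec_apply, sum_AmatQInv_succ_apply]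
    simp only [AmatQInv, of_apply, one_apply, Fin.val_eq_zero_iff, Nat.cast_succ]
    grind

theorem AmatQ_inv (h : ℕ) : (AmatQ h)⁻¹ = AmatQInv h :=
  inv_eq_right_inv (AmatQ_mul_AmatQInv h)

theorem isUnit_det_AmatQ (h : ℕ) : IsUnit (AmatQ h).det :=
  isUnit_det_of_right_inverse (AmatQ_mul_AmatQInv h)

theorem exists_eq_add_of_ckMk_eq {x x' : Fin h → ℤ} (hx : ckMk x = ckMk x') :
    ∃ w, x = x' + Amat h *ᵥ w := by
  obtain ⟨w, hw⟩ := (Submodule.Quotient.eq _).1 hx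
  exact ⟨w, by rw [← mulVecLin_apply, hw, add_sub_cancel]⟩

theorem linkR_comm (x y : Fin h → ℤ) : linkR h x y = linkR h y x :=
  congrArg _ (dotProduct_inv_mulVec_comm (isSymm_AmatQ h) _ _)

theorem ratVec_add_Amat_mulVec_dotProduct (x w : Fin h → ℤ) (y : Fin h → ℚ) :
    ratVec (x + Amat h *ᵥ w) ⬝ᵥ (AmatQ h)⁻¹ *ᵥ y =
      ratVec x ⬝ᵥ (AmatQ h)⁻¹ *ᵥ y + ratVec w ⬝ᵥ y := by
  rw [ratVec_add, ratVec_mulVec]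
  exact add_mulVec_dotProduct_inv_mulVec (isSymm_AmatQ h) (isUnit_det_AmatQ h) _ _ _

theorem linkR_congr_left {x x' : Fin h → ℤ} (hx : ckMk x = ckMk x') (y : Fin h → ℤ) :
    linkR h x y = linkR h x' y := by
  obtain ⟨w, rfl⟩ := exists_eq_add_of_ckMk_eq hx
  rw [linkR, ratVec_add_Amat_mulVec_dotProduct, ratVec_dotProduct_ratVec,
    coe_add_intCast_addCircle_one, linkR]

theorem linkR_congr {x x' y y' : Fin h → ℤ} (hx : ckMk x = ckMk x') (hy : ckMk y = ckMk y') :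
    linkR h x y = linkR h x' y' := by
  rw [linkR_congr_left hx, linkR_comm, linkR_congr_left hy, linkR_comm]

theorem quadR_eq_half (x : Fin h → ℤ) :
    quadR h x = ((ratVec x ⬝ᵥ (AmatQ h)⁻¹ *ᵥ ratVec x / 2 : ℚ) : AddCircle (1 : ℚ)) := by
  have hdet : IsUnit (QmatQ h + (QmatQ h)ᵀ).det := AmatQ_eq_add_transpose h ▸ isUnit_det_AmatQ h
  rw [quadR, AmatQ_eq_add_transpose, ← two_mul_dotProduct_inv_mul_mul_inv_mulVec_self hdet,
    mul_div_cancel_left₀ _ two_ne_zero]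

theorem dotProduct_Amat_mulVec_self (w : Fin h → ℤ) :
    w ⬝ᵥ Amat h *ᵥ w = 2 * (w ⬝ᵥ Qmat h *ᵥ w) :=
  dotProduct_add_transpose_mulVec_self (Qmat h) w

theorem quadR_congr {x x' : Fin h → ℤ} (hx : ckMk x = ckMk x') : quadR h x = quadR h x' := by
  obtain ⟨w, rfl⟩ := exists_eq_add_of_ckMk_eq hx
  have hexpand :
      ratVec (x' + Amat h *ᵥ w) ⬝ᵥ (AmatQ h)⁻¹ *ᵥ ratVec (x' + Amat h *ᵥ w) / 2 =
        ratVec x' ⬝ᵥ (AmatQ h)⁻¹ *ᵥ ratVec x' / 2 + (w ⬝ᵥ x' + w ⬝ᵥ Qmat h *ᵥ w : ℤ) := by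
    rw [ratVec_add_Amat_mulVec_dotProduct, dotProduct_inv_mulVec_comm (isSymm_AmatQ h),
      ratVec_add_Amat_mulVec_dotProduct, ratVec_dotProduct_ratVec, ratVec_dotProduct_ratVec,
      dotProduct_add, dotProduct_Amat_mulVec_self]
    push_cast
    ring
  rw [quadR_eq_half, hexpand, coe_add_intCast_addCircle_one, quadR_eq_half]

end BoundaryForms

/-- Dependent functions on `Fin 3` as triples; it carries the indexed product `∏ᵢ ℤ/dᵢ` of the Smith
normal form to `ℤ/8 ⊕ ℤ/2 ⊕ ℤ/2`. -/
def piFinThreeAddEquiv (M : Fin 3 → Type*) [∀ i, AddCommMonoid (M i)] :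
    (∀ i, M i) ≃+ M 0 × M 1 × M 2 :=
  ((Fin.consLinearEquiv ℕ M).symm.trans
    ((LinearEquiv.refl ℕ (M 0)).prodCongr (LinearEquiv.piFinTwo ℕ fun i => M i.succ))).toAddEquiv

/-- The generators of orders `8, 2, 2` of the cokernel of `A₃`, as the columns of a unimodular
matrix: the left factor of the Smith normal form of `A₃`. -/
def smithBasisThree : Matrix (Fin 3) (Fin 3) ℤ := !![1, 2, 2; 0, 0, 1; 0, 1, 0]

theorem isUnit_smithBasisThree : IsUnit smithBasisThree := by
  rw [isUnit_iff_isUnit_det, Int.isUnit_iff]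
  decide

theorem exists_isUnit_Amat_three_mul_eq :
    ∃ V, IsUnit V ∧ Amat 3 * V = smithBasisThree * diagonal fun i => ((![8, 2, 2] i : ℕ) : ℤ) := by
  refine ⟨!![3, 1, 1; -2, -1, 0; -2, 0, -1], ?_, by decide⟩
  rw [isUnit_iff_isUnit_det, Int.isUnit_iff]
  decide

theorem exists_addEquiv_coker_three :
    ∃ u : (ZMod 8 × ZMod 2 × ZMod 2) ≃+ Coker 3,
      ∀ x : Fin 3 → ℤ, u (x 0, x 1, x 2) = ckMk (smithBasisThree *ᵥ x) := by
  obtain ⟨V, hV, hAV⟩ := exists_isUnit_Amat_three_mul_eq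
  obtain ⟨e, he⟩ := exists_addEquiv_coker_of_smithNormalForm isUnit_smithBasisThree hV hAV
  refine ⟨(piFinThreeAddEquiv fun i => ZMod (![8, 2, 2] i)).symm.trans e, fun x => ?_⟩
  exact (congrArg e ((AddEquiv.symm_apply_eq _).2 rfl)).trans (he x)

theorem transpose_mul_inv_mul_smithBasisThree :
    (smithBasisThree.map Int.cast)ᵀ * (AmatQ 3)⁻¹ * smithBasisThree.map Int.cast =
      !![3 / 8, 1 / 2, 1 / 2; 1 / 2, 1, 1 / 2; 1 / 2, 1 / 2, 1] := by
  rw [AmatQ_inv]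
  decide +kernel

theorem dotProduct_inv_mulVec_smithBasisThree (x y : Fin 3 → ℤ) :
    ratVec (smithBasisThree *ᵥ x) ⬝ᵥ (AmatQ 3)⁻¹ *ᵥ ratVec (smithBasisThree *ᵥ y) =
      3 * x 0 * y 0 / 8 +
        (x 0 * y 1 + x 1 * y 0 + x 0 * y 2 + x 2 * y 0 + x 1 * y 2 + x 2 * y 1) / 2 +
        (x 1 * y 1 + x 2 * y 2) := by
  rw [ratVec_mulVec, ratVec_mulVec, ← vecMul_transpose, ← dotProduct_mulVec, mulVec_mulVec,
    mulVec_mulVec, transpose_mul_inv_mul_smithBasisThree]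
  simp only [dotProduct, ratVec, mulVec, of_apply, cons_val', cons_val_fin_one, Fin.sum_univ_three,
    cons_val_zero, cons_val_one, cons_val]
  ring

theorem linkR_three_smithBasisThree_mulVec (x y : Fin 3 → ℤ) :
    linkR 3 (smithBasisThree *ᵥ x) (smithBasisThree *ᵥ y) =
      ((3 * x 0 * y 0 / 8 +
        (x 0 * y 1 + x 1 * y 0 + x 0 * y 2 + x 2 * y 0 + x 1 * y 2 + x 2 * y 1) / 2 : ℚ) :
        AddCircle (1 : ℚ)) := by
  rw [linkR, dotProduct_inv_mulVec_smithBasisThree]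
  exact_mod_cast coe_add_intCast_addCircle_one _ (x 1 * y 1 + x 2 * y 2)

theorem quadR_three_smithBasisThree_mulVec (x : Fin 3 → ℤ) :
    quadR 3 (smithBasisThree *ᵥ x) =
      ((3 * (x 0 : ℚ) ^ 2 / 16 +
        ((x 1 : ℚ) ^ 2 + (x 2 : ℚ) ^ 2 + x 0 * x 1 + x 0 * x 2 + x 1 * x 2) / 2 : ℚ) :
        AddCircle (1 : ℚ)) := by
  rw [quadR_eq_half, dotProduct_inv_mulVec_smithBasisThree]
  congr 1
  ring

/-- For h = 3 there is a group isomorphism u : ℤ/8 ⊕ ℤ/2 ⊕ ℤ/2 → ℤ³/A₃ℤ³ identifying the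
boundary linking form with 3x₁y₁/8 + (x₁y₂+x₂y₁+x₁y₃+x₃y₁+x₂y₃+x₃y₂)/2 mod ℤ and the
boundary quadratic form with 3x₁²/16 + (x₂²+x₃²+x₁x₂+x₁x₃+x₂x₃)/2 mod ℤ,
computed from integer lifts x, y of the arguments. -/
theorem boundary_forms_h3 :
    ∃ u : (ZMod 8 × ZMod 2 × ZMod 2) ≃+ Coker 3,
      ∀ x y x' y' : Fin 3 → ℤ,
        ckMk x' = u ((x 0 : ZMod 8), (x 1 : ZMod 2), (x 2 : ZMod 2)) →
        ckMk y' = u ((y 0 : ZMod 8), (y 1 : ZMod 2), (y 2 : ZMod 2)) →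
        linkR 3 x' y' =
          ((3 * (x 0 : ℚ) * (y 0 : ℚ) / 8 +
            ((x 0 : ℚ) * (y 1 : ℚ) + (x 1 : ℚ) * (y 0 : ℚ) + (x 0 : ℚ) * (y 2 : ℚ) +
              (x 2 : ℚ) * (y 0 : ℚ) + (x 1 : ℚ) * (y 2 : ℚ) + (x 2 : ℚ) * (y 1 : ℚ)) / 2 : ℚ) :
            AddCircle (1 : ℚ)) ∧
        quadR 3 x' =
          ((3 * (x 0 : ℚ) ^ 2 / 16 +
            ((x 1 : ℚ) ^ 2 + (x 2 : ℚ) ^ 2 + (x 0 : ℚ) * (x 1 : ℚ) + (x 0 : ℚ) * (x 2 : ℚ) +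
              (x 1 : ℚ) * (x 2 : ℚ)) / 2 : ℚ) : AddCircle (1 : ℚ)) := by
  obtain ⟨u, hu⟩ := exists_addEquiv_coker_three
  refine ⟨u, fun x y x' y' hx hy => ?_⟩
  rw [hu] at hx hy
  rw [linkR_congr hx hy, quadR_congr hx]
  exact ⟨linkR_three_smithBasisThree_mulVec x y, quadR_three_smithBasisThree_mulVec x⟩
end
end

section
/- For h = 5, the group {P ∈ GL₅(ℤ) : P^T A₅ P = A₅} of isometries of the symmetric bilinear form represented by A₅ = Q₅ + Q₅^T is finite of order 3840. -/
open Matrix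

noncomputable section

/-! Since `A_h = 2 MᵀM`, where the columns of `M` form a basis of the even sublattice
`D_h = {v ∈ ℤʰ : v ⬝ v even}`, the isometries of `A_h` are those of `D_h`. Every isometry of `ℤʰ`
preserves `D_h`. Conversely, an isometry `f` of `D_h` sends `2 eⱼ` to a vector `w` of norm `4` whose
products with `D_h` are all even, so the coordinates of `w` have the same parity. If they were odd,
their squares would be `1` modulo `8`, which forces `h = 4`; otherwise `f` extends to `ℤʰ` by
`eⱼ ↦ w / 2`. Finally, the isometries of `ℤʰ` are the `2ʰ h!` signed permutations. -/

section SignedPermutations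

variable {n : Type*} [DecidableEq n]

/-- The matrix of the signed permutation of `ℤⁿ` whose `i`-th row is `ε i` times the basis vector
of index `σ i`. -/
def signedPermMatrix (ε : n → ℤˣ) (σ : Equiv.Perm n) : Matrix n n ℤ :=
  of fun i => Pi.single (σ i) (ε i : ℤ)

theorem signedPermMatrix_injective :
    Function.Injective fun p : (n → ℤˣ) × Equiv.Perm n => signedPermMatrix p.1 p.2 := by
  rintro ⟨ε, σ⟩ ⟨η, τ⟩ h
  have hrow : ∀ i, (Pi.single (σ i) (ε i : ℤ) : n → ℤ) = Pi.single (τ i) (η i : ℤ) :=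
    fun i => congrFun (congrArg of.symm h) i
  have hperm : σ = τ := by
    ext1 i
    by_contra hne
    simpa [hne] using congrFun (hrow i) (σ i)
  subst hperm
  have hsign : ε = η := funext fun i => Units.ext (Pi.single_injective _ (hrow i))
  rw [hsign]

variable [Fintype n]

theorem exists_eq_single_of_dotProduct_self_eq_one {v : n → ℤ} (hv : v ⬝ᵥ v = 1) :
    ∃ (i : n) (u : ℤˣ), v = Pi.single i (u : ℤ) := by
  obtain ⟨i, hi⟩ : ∃ i, v i ≠ 0 := by
    by_contra! hzero
    simp [dotProduct, hzero] at hv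
  rw [dotProduct, ← Finset.add_sum_erase _ _ (Finset.mem_univ i)] at hv
  have hpos : 0 < v i * v i := mul_self_pos.mpr hi
  have hnonneg : ∀ k ∈ Finset.univ.erase i, 0 ≤ v k * v k := fun k _ => mul_self_nonneg (v k)
  have hsum := Finset.sum_nonneg hnonneg
  have hunit : v i * v i = 1 := by linarith [Int.add_one_le_of_lt hpos]
  have hrest := (Finset.sum_eq_zero_iff_of_nonneg hnonneg).mp (by linarith)
  refine ⟨i, (IsUnit.of_mul_eq_one _ hunit).unit, funext fun k => ?_⟩
  obtain rfl | hk := eq_or_ne k i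
  · simp
  · simpa [hk] using hrest k

theorem signedPermMatrix_mem_orthogonalGroup (ε : n → ℤˣ) (σ : Equiv.Perm n) :
    signedPermMatrix ε σ ∈ orthogonalGroup n ℤ := by
  rw [mem_orthogonalGroup_iff]
  ext i j
  change Pi.single (σ i) (ε i : ℤ) ⬝ᵥ Pi.single (σ j) (ε j : ℤ) = _
  obtain rfl | hij := eq_or_ne i j
  · simp [← Units.val_mul]
  · simp [hij]

theorem exists_eq_signedPermMatrix {N : Matrix n n ℤ} (hN : N ∈ orthogonalGroup n ℤ) :
    ∃ ε σ, N = signedPermMatrix ε σ := by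
  have hdot : ∀ i j, N i ⬝ᵥ N j = (1 : Matrix n n ℤ) i j := fun i j =>
    congrFun₂ ((mem_orthogonalGroup_iff n ℤ).mp hN) i j
  choose s ε hrow using fun i =>
    exists_eq_single_of_dotProduct_self_eq_one ((hdot i i).trans (one_apply_eq i))
  have hinj : Function.Injective s := by
    intro i j hij
    by_contra hne
    have horth : N i ⬝ᵥ N j = 0 := (hdot i j).trans (one_apply_ne hne)
    simp [hrow, hij] at horth
  exact ⟨ε, Equiv.ofBijective s (Finite.injective_iff_bijective.mp hinj), funext hrow⟩

theorem card_orthogonalGroup_int :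
    Nat.card (orthogonalGroup n ℤ) = 2 ^ Fintype.card n * (Fintype.card n).factorial := by
  have hbij : Function.Bijective fun p : (n → ℤˣ) × Equiv.Perm n =>
      (⟨signedPermMatrix p.1 p.2, signedPermMatrix_mem_orthogonalGroup p.1 p.2⟩ :
        orthogonalGroup n ℤ) := by
    refine ⟨fun p q h => signedPermMatrix_injective (congrArg Subtype.val h), ?_⟩
    rintro ⟨N, hN⟩
    obtain ⟨ε, σ, rfl⟩ := exists_eq_signedPermMatrix hN
    exact ⟨(ε, σ), rfl⟩
  rw [← Nat.card_eq_of_bijective _ hbij, Nat.card_prod, Nat.card_fun, Nat.card_perm]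
  simp

end SignedPermutations

section Parity

variable {ι : Type*} [Fintype ι]

theorem even_dotProduct_self_iff (v : ι → ℤ) : Even (v ⬝ᵥ v) ↔ Even (∑ i, v i) := by
  have hdiff : Even (v ⬝ᵥ v - ∑ i, v i) := by
    rw [dotProduct, ← Finset.sum_sub_distrib]
    refine Finset.even_sum _ fun i _ => ?_
    simpa [mul_sub] using Int.even_mul_pred_self (v i)
  exact Int.even_sub.mp hdiff

theorem card_eq_four_of_dotProduct_self_eq_four_of_odd {v : ι → ℤ} (hv : v ⬝ᵥ v = 4)
    (hodd : ∀ i, Odd (v i)) : Fintype.card ι = 4 := by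
  choose t ht using fun i => Int.eight_dvd_sq_sub_one_of_odd (hodd i)
  have ht_nonneg : 0 ≤ ∑ i, t i := Finset.sum_nonneg fun i _ => by
    have hne : v i ≠ 0 := fun h => by simpa [h] using hodd i
    have hpos : 0 < v i ^ 2 := by positivity
    have hsq := ht i
    lia
  have hsum : v ⬝ᵥ v = 8 * ∑ i, t i + Fintype.card ι := by
    rw [dotProduct, Finset.mul_sum, Fintype.card_eq_sum_ones, Nat.cast_sum,
      ← Finset.sum_add_distrib]
    exact Finset.sum_congr rfl fun i _ => by push_cast; linarith [ht i, sq (v i)]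
  lia

theorem even_of_dotProduct_self_eq_four (hι : Fintype.card ι ≠ 4) {v : ι → ℤ}
    (hv : v ⬝ᵥ v = 4) (hparity : ∀ i j, Even (v i) ↔ Even (v j)) (i : ι) : Even (v i) := by
  by_contra hi
  refine hι (card_eq_four_of_dotProduct_self_eq_four_of_odd hv fun j => ?_)
  rwa [← Int.not_even_iff_odd, hparity j i]

theorem even_sum_mulVec_iff [DecidableEq ι] {N : Matrix ι ι ℤ} (hN : N ∈ orthogonalGroup ι ℤ)
    (v : ι → ℤ) :
    Even (∑ i, (N *ᵥ v) i) ↔ Even (∑ i, v i) := by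
  rw [← even_dotProduct_self_iff, ← even_dotProduct_self_iff, dotProduct_mulVec, vecMul_mulVec,
    (mem_orthogonalGroup_iff' ι ℤ).mp hN, vecMul_one]

end Parity

section EvenLattice

variable {n : ℕ}

/-- The matrix whose columns `2 e₀, e₀ + e₁, …, e₀ + eₙ` form a basis of the even sublattice
`D_{n+1}` of `ℤⁿ⁺¹`. -/
def evenLatticeBasis (n : ℕ) : Matrix (Fin (n + 1)) (Fin (n + 1)) ℤ :=
  of (Fin.cons (Fin.cons 2 1) fun k => Pi.single k.succ 1)

theorem Amat_succ_eq_two_smul :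
    Amat (n + 1) = (2 : ℤ) • ((evenLatticeBasis n)ᵀ * evenLatticeBasis n) := by
  ext i j
  cases i using Fin.cases <;> cases j using Fin.cases
  case succ.succ i j =>
    obtain hij | rfl | hij := lt_trichotomy i j
    · simp [Amat, Qmat, evenLatticeBasis, mul_apply, Fin.sum_univ_succ, Pi.single_apply, hij.le,
        hij.not_ge, hij.ne]
    · simp [Amat, Qmat, evenLatticeBasis, mul_apply, Fin.sum_univ_succ, Pi.single_apply]
    · simp [Amat, Qmat, evenLatticeBasis, mul_apply, Fin.sum_univ_succ, Pi.single_apply, hij.le,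
        hij.not_ge, hij.ne']
  all_goals simp [Amat, Qmat, evenLatticeBasis, mul_apply, Fin.sum_univ_succ]

theorem det_evenLatticeBasis : (evenLatticeBasis n).det = 2 := by
  have hupper : (evenLatticeBasis n).IsUpperTriangular := fun i j (hij : j < i) => by
    cases i using Fin.cases with
    | zero => exact absurd hij (Fin.not_lt_zero j)
    | succ k => exact Pi.single_eq_of_ne hij.ne 1
  rw [det_of_isUpperTriangular hupper, Fin.prod_univ_succ]
  simp [evenLatticeBasis]

theorem isRegular_evenLatticeBasis : IsRegular (evenLatticeBasis n) :=
  isRegular_of_isLeftRegular_det <| by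
    rw [det_evenLatticeBasis]
    exact (IsRegular.of_ne_zero two_ne_zero).left

theorem exists_evenLatticeBasis_mulVec_eq_iff {v : Fin (n + 1) → ℤ} :
    (∃ x, evenLatticeBasis n *ᵥ x = v) ↔ Even (∑ i, v i) := by
  have hmulVec : ∀ x, evenLatticeBasis n *ᵥ x =
      Fin.cons (2 * x 0 + ∑ k : Fin n, x k.succ) (Fin.tail x) := by
    intro x
    ext i
    refine Fin.cases ?_ (fun k => ?_) i <;>
      simp [evenLatticeBasis, mulVec, dotProduct, Fin.sum_univ_succ, Fin.tail, Pi.single_apply]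
  rw [Fin.sum_univ_succ]
  constructor
  · rintro ⟨x, rfl⟩
    simp only [hmulVec, Fin.cons_zero, Fin.cons_succ, Fin.tail, add_assoc, ← two_mul, ← mul_add]
    exact even_two_mul _
  · rintro ⟨c, hc⟩
    refine ⟨Fin.cons (c - ∑ k : Fin n, v k.succ) (Fin.tail v), ?_⟩
    rw [hmulVec]
    ext i
    refine Fin.cases ?_ (fun k => ?_) i
    · simp only [Fin.cons_zero, Fin.cons_succ, Fin.tail]
      lia
    · simp [Fin.tail]

theorem even_iff_even_of_even_vecMul_evenLatticeBasis {w : Fin (n + 1) → ℤ}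
    (hw : ∀ j, Even ((w ᵥ* evenLatticeBasis n) j)) (i j : Fin (n + 1)) :
    Even (w i) ↔ Even (w j) := by
  have hzero : ∀ i, Even (w i) ↔ Even (w 0) := by
    refine Fin.cases Iff.rfl fun k => ?_
    have hk : (w ᵥ* evenLatticeBasis n) k.succ = w 0 + w k.succ := by
      simp [evenLatticeBasis, vecMul, dotProduct, Fin.sum_univ_succ, Pi.single_apply]
    exact (Int.even_add.mp (hk ▸ hw k.succ)).symm
  exact (hzero i).trans (hzero j).symm

theorem transpose_mul_Amat_succ_mul_eq_iff {P : Matrix (Fin (n + 1)) (Fin (n + 1)) ℤ} :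
    Pᵀ * Amat (n + 1) * P = Amat (n + 1) ↔
      (evenLatticeBasis n * P)ᵀ * (evenLatticeBasis n * P) =
        (evenLatticeBasis n)ᵀ * evenLatticeBasis n := by
  rw [Amat_succ_eq_two_smul, Matrix.mul_smul, Matrix.smul_mul,
    (smul_right_injective _ (two_ne_zero : (2 : ℤ) ≠ 0)).eq_iff, transpose_mul]
  simp only [Matrix.mul_assoc]

theorem exists_isometry_of_mem_orthogonalGroup {N : Matrix (Fin (n + 1)) (Fin (n + 1)) ℤ}
    (hN : N ∈ orthogonalGroup (Fin (n + 1)) ℤ) :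
    ∃ P, (IsUnit P.det ∧ Pᵀ * Amat (n + 1) * P = Amat (n + 1)) ∧
      evenLatticeBasis n * P = N * evenLatticeBasis n := by
  set M := evenLatticeBasis n
  have hcol : ∀ j, ∃ x, M *ᵥ x = N *ᵥ Mᵀ j := fun j => by
    rw [exists_evenLatticeBasis_mulVec_eq_iff, even_sum_mulVec_iff hN,
      ← exists_evenLatticeBasis_mulVec_eq_iff]
    exact ⟨Pi.single j 1, mulVec_single_one M j⟩
  choose p hp using hcol
  obtain ⟨P, hMP⟩ : ∃ P, M * P = N * M :=
    ⟨(of p)ᵀ, Matrix.ext fun i j => congrFun (hp j) i⟩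
  refine ⟨P, ⟨?_, transpose_mul_Amat_succ_mul_eq_iff.mpr ?_⟩, hMP⟩
  · have hdet : 2 * P.det = 2 * N.det := by
      rw [← det_evenLatticeBasis (n := n), ← det_mul, hMP, det_mul, mul_comm]
    rw [mul_left_cancel₀ two_ne_zero hdet]
    exact UnitaryGroup.det_isUnit ⟨N, hN⟩
  · calc (M * P)ᵀ * (M * P) = Mᵀ * (Nᵀ * N) * M := by
          rw [hMP, transpose_mul]; simp only [Matrix.mul_assoc]
      _ = Mᵀ * M := by rw [(mem_orthogonalGroup_iff' _ ℤ).mp hN, Matrix.mul_one]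

theorem exists_mem_orthogonalGroup_eq_two_smul (hn : n + 1 ≠ 4)
    {W X : Matrix (Fin (n + 1)) (Fin (n + 1)) ℤ} (hnorm : Wᵀ * W = (4 : ℤ) • 1)
    (hX : Wᵀ * evenLatticeBasis n = (2 : ℤ) • X) :
    ∃ N ∈ orthogonalGroup (Fin (n + 1)) ℤ, W = (2 : ℤ) • N := by
  have hparity : ∀ j k, Even ((Wᵀ j ᵥ* evenLatticeBasis n) k) := fun j k => by
    rw [← mul_apply_eq_vecMul, hX]
    exact ⟨X j k, two_mul _⟩
  have hcol : ∀ j, Wᵀ j ⬝ᵥ Wᵀ j = 4 := fun j =>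
    (congrFun₂ hnorm j j).trans (by simp)
  have heven : ∀ i j, Even (W i j) := fun i j =>
    even_of_dotProduct_self_eq_four (by simpa using hn) (hcol j)
      (even_iff_even_of_even_vecMul_evenLatticeBasis (hparity j)) i
  choose N hN using fun i j => (heven i j).two_dvd
  have hWN : W = (2 : ℤ) • of N := Matrix.ext hN
  refine ⟨of N, (mem_orthogonalGroup_iff' _ ℤ).mpr ?_, hWN⟩
  refine smul_right_injective _ (four_ne_zero : (4 : ℤ) ≠ 0) ?_
  change (4 : ℤ) • ((of N)ᵀ * of N) = (4 : ℤ) • 1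
  rw [← hnorm, hWN, transpose_smul, Matrix.smul_mul, Matrix.mul_smul, smul_smul]
  norm_num

theorem exists_mem_orthogonalGroup_of_isometry (hn : n + 1 ≠ 4)
    {P : Matrix (Fin (n + 1)) (Fin (n + 1)) ℤ} (hdet : IsUnit P.det)
    (hP : Pᵀ * Amat (n + 1) * P = Amat (n + 1)) :
    ∃ N ∈ orthogonalGroup (Fin (n + 1)) ℤ,
      evenLatticeBasis n * P = N * evenLatticeBasis n := by
  set M := evenLatticeBasis n
  have hMadj : M * M.adjugate = (2 : ℤ) • 1 := by rw [mul_adjugate, det_evenLatticeBasis]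
  have hadjM : M.adjugate * M = (2 : ℤ) • 1 := by rw [adjugate_mul, det_evenLatticeBasis]
  -- As `adj M = 2 M⁻¹`, the columns of `W = 2 M P M⁻¹` are the images of the vectors `2 eⱼ`.
  set W := M * P * M.adjugate with hW
  have hWM : W * M = (2 : ℤ) • (M * P) := by
    rw [hW, Matrix.mul_assoc, hadjM, Matrix.mul_smul, Matrix.mul_one]
  have hWMP : Wᵀ * (M * P) = (2 : ℤ) • M := by
    rw [hW, transpose_mul, Matrix.mul_assoc, transpose_mul_Amat_succ_mul_eq_iff.mp hP,
      ← Matrix.mul_assoc, ← transpose_mul, hMadj, transpose_smul, transpose_one, Matrix.smul_mul,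
      Matrix.one_mul]
  have hnorm : Wᵀ * W = (4 : ℤ) • 1 := by
    calc Wᵀ * W = Wᵀ * (M * P) * M.adjugate := (Matrix.mul_assoc _ _ _).symm
      _ = (2 : ℤ) • (2 : ℤ) • 1 := by rw [hWMP, Matrix.smul_mul, hMadj]
      _ = (4 : ℤ) • 1 := smul_smul _ _ _
  have hdual : Wᵀ * M = (2 : ℤ) • (M * P⁻¹) := by
    rw [← Matrix.smul_mul, ← hWMP, ← Matrix.mul_assoc, mul_nonsing_inv_cancel_right _ _ hdet]
  obtain ⟨N, hN, hWN⟩ := exists_mem_orthogonalGroup_eq_two_smul hn hnorm hdual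
  refine ⟨N, hN, smul_right_injective _ (two_ne_zero : (2 : ℤ) ≠ 0) ?_⟩
  simp only [← hWM, hWN, Matrix.smul_mul]

theorem card_isometries_Amat_succ (hn : n + 1 ≠ 4) :
    Nat.card {P : Matrix (Fin (n + 1)) (Fin (n + 1)) ℤ //
      IsUnit P.det ∧ Pᵀ * Amat (n + 1) * P = Amat (n + 1)} =
      Nat.card (orthogonalGroup (Fin (n + 1)) ℤ) := by
  choose f hf hfM using fun N : orthogonalGroup (Fin (n + 1)) ℤ =>
    exists_isometry_of_mem_orthogonalGroup N.2
  refine (Nat.card_eq_of_bijective (fun N => ⟨f N, hf N⟩) ⟨fun N L hNL => ?_, ?_⟩).symm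
  · have hfNL : f N = f L := congrArg Subtype.val hNL
    refine Subtype.ext (isRegular_evenLatticeBasis.right ?_)
    change N.1 * evenLatticeBasis n = L.1 * evenLatticeBasis n
    rw [← hfM N, ← hfM L, hfNL]
  · rintro ⟨P, hdet, hP⟩
    obtain ⟨N, hN, hPN⟩ := exists_mem_orthogonalGroup_of_isometry hn hdet hP
    refine ⟨⟨N, hN⟩, Subtype.ext (isRegular_evenLatticeBasis.left ?_)⟩
    exact (hfM ⟨N, hN⟩).trans hPN.symm

end EvenLattice

theorem isometry_group_order_h5_general {h : ℕ} (hh : h ≠ 4) :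
    Nat.card {P : Matrix (Fin h) (Fin h) ℤ // IsUnit P.det ∧ Pᵀ * Amat h * P = Amat h} =
      2 ^ h * h.factorial := by
  obtain _ | n := h
  · simp [eq_iff_true_of_subsingleton]
  · rw [card_isometries_Amat_succ hh, card_orthogonalGroup_int, Fintype.card_fin]

/-- For h = 5, the group of isometries of the symmetric bilinear form represented by
A_5 = Q_5 + Q_5ᵀ, i.e. {P ∈ GL_5(ℤ) : Pᵀ A_5 P = A_5}, is finite of order 3840. -/
theorem isometry_group_order_h5 :
    Nat.card {P : Matrix (Fin 5) (Fin 5) ℤ // IsUnit P.det ∧ Pᵀ * Amat 5 * P = Amat 5} =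
      3840 :=
  isometry_group_order_h5_general (by decide)
end
end
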